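/- There is a constant C > 0 such that for all integers m, d ≥ 2 with m ≥ d, the expected star discrepancy of a jittered sampling point set P of N = m^d points in [0,1)^d satisfies E[D*(P)] ≥ C · √(d·m^d) · √((1 + log(m/d))/(m/d)). -/

import Mathlib

open MeasureTheory ProbabilityTheory Real

noncomputable section

/-- The axis-aligned cube `∏_i [x_i/m, x_i/m + 1/m)` of the `m`-grid partition of `[0,1)^d`. -/
def jitterCube (m d : ℕ) (x : Fin d → Fin m) : Set (Fin d → ℝ) :=
  Set.univ.pi fun i => Set.Ico ((x i : ℝ) / m) ((x i : ℝ) / m + 1 / m)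

/-- The distribution of a jittered sampling point configuration: independently, one point
uniformly distributed in each of the `m^d` cubes. -/
def jitterMeasure (m d : ℕ) : Measure ((Fin d → Fin m) → (Fin d → ℝ)) :=
  Measure.pi fun x => ((m : ENNReal) ^ d) • volume.restrict (jitterCube m d x)

open scoped Classical in
/-- Signed (non-normalized) discrepancy `|P ∩ A| - N·λ(A)` with `N = m^d` of a point
configuration `P`. -/
def jdisc (m d : ℕ) (P : (Fin d → Fin m) → (Fin d → ℝ)) (A : Set (Fin d → ℝ)) : ℝ :=
  ((Finset.univ.filter fun x => P x ∈ A).card : ℝ) - (m : ℝ) ^ d * (volume A).toReal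

/-- The anchored box `[0,y) = ∏_i [0, y_i)`. -/
def anchoredBox (d : ℕ) (y : Fin d → ℝ) : Set (Fin d → ℝ) :=
  Set.univ.pi fun i => Set.Ico 0 (y i)

/-- The (non-normalized) star discrepancy `D*(P) = sup_{y ∈ [0,1)^d} |disc([0,y))|`. -/
def starDisc (m d : ℕ) (P : (Fin d → Fin m) → (Fin d → ℝ)) : ℝ :=
  ⨆ y : {y : Fin d → ℝ // ∀ i, y i ∈ Set.Ico (0 : ℝ) 1}, |jdisc m d P (anchoredBox d y.1)|

/-- The expected star discrepancy of a jittered sampling point set of `m^d` points. -/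
def expStarDisc (m d : ℕ) : ℝ :=
  ∫ P, starDisc m d P ∂(jitterMeasure m d)


theorem js_moments {Ω ι : Type*} [MeasurableSpace Ω] (μ : Measure Ω) [IsProbabilityMeasure μ]
    (ξ : ι → Ω → ℝ) (hm : ∀ x, Measurable (ξ x)) (hind : iIndepFun ξ μ)
    (hsq : ∀ x ω, ξ x ω = 1 ∨ ξ x ω = -1) (hmean : ∀ x, ∫ ω, ξ x ω ∂μ = 0) (T : Finset ι) :
    (∀ k : ℕ, Integrable (fun ω => (∑ x ∈ T, ξ x ω) ^ k) μ) ∧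
    ∫ ω, (∑ x ∈ T, ξ x ω) ∂μ = 0 ∧ ∫ ω, (∑ x ∈ T, ξ x ω) ^ 2 ∂μ = T.card ∧
      ∫ ω, (∑ x ∈ T, ξ x ω) ^ 4 ∂μ ≤ 3 * (T.card : ℝ) ^ 2 := by
  classical
  have hbd : ∀ x ω, |ξ x ω| ≤ 1 := by
    intro x ω; rcases hsq x ω with h | h <;> simp [h]
  have hSm : ∀ T : Finset ι, Measurable (fun ω => ∑ x ∈ T, ξ x ω) := fun T =>
    Finset.measurable_fun_sum T fun x _ => hm x
  have hSb : ∀ (T : Finset ι) ω, |∑ x ∈ T, ξ x ω| ≤ T.card := by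
    intro T ω
    calc |∑ x ∈ T, ξ x ω| ≤ ∑ x ∈ T, |ξ x ω| := Finset.abs_sum_le_sum_abs _ _
      _ ≤ ∑ x ∈ T, (1 : ℝ) := Finset.sum_le_sum fun x _ => hbd x ω
      _ = T.card := by simp
  have hSint : ∀ (T : Finset ι) (k : ℕ), Integrable (fun ω => (∑ x ∈ T, ξ x ω) ^ k) μ := by
    intro T k
    refine Integrable.of_bound ((hSm T).pow_const k).aestronglyMeasurable ((T.card : ℝ) ^ k)
      (Filter.Eventually.of_forall fun ω => ?_)
    rw [Real.norm_eq_abs, abs_pow]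
    exact pow_le_pow_left₀ (abs_nonneg _) (hSb T ω) k
  refine ⟨hSint T, ?_⟩
  induction T using Finset.induction_on with
  | empty => simp
  | insert a T ha ih =>
    obtain ⟨h1, h2, h4⟩ := ih
    have hI : IndepFun (fun ω => ∑ x ∈ T, ξ x ω) (ξ a) μ := by
      have := hind.indepFun_finsetSum_of_notMem hm ha
      convert this using 1
      ext ω; simp
    have hz : ∀ k : ℕ, ∫ ω, (∑ x ∈ T, ξ x ω) ^ k * ξ a ω ∂μ = 0 := by
      intro k
      have h := (hI.comp (φ := fun t : ℝ => t ^ k) (ψ := fun t : ℝ => t) (by fun_prop)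
        (by fun_prop)).integral_fun_mul_eq_mul_integral
          ((hSm T).pow_const k).aestronglyMeasurable (hm a).aestronglyMeasurable
      simp only [Function.comp] at h
      rw [h, hmean a, mul_zero]
    have hzi : ∀ k : ℕ, Integrable (fun ω => (∑ x ∈ T, ξ x ω) ^ k * ξ a ω) μ := by
      intro k
      refine (hSint T k).mul_bdd (c := 1) (hm a).aestronglyMeasurable
        (Filter.Eventually.of_forall fun ω => hbd a ω)
    have ha2 : ∀ ω, ξ a ω ^ 2 = 1 := by
      intro ω; rcases hsq a ω with h | h <;> simp [h]
    have hai : Integrable (ξ a) μ := by simpa using hzi 0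
    simp_rw [Finset.sum_insert ha]
    rw [Finset.card_insert_of_notMem ha]
    refine ⟨?_, ?_, ?_⟩
    · rw [integral_add hai (by simpa using hSint T 1), hmean a, h1, add_zero]
    · have e : ∀ ω, (ξ a ω + ∑ x ∈ T, ξ x ω) ^ 2
          = (∑ x ∈ T, ξ x ω) ^ 2 + 2 * ((∑ x ∈ T, ξ x ω) ^ 1 * ξ a ω) + 1 := by
        intro ω; linear_combination ha2 ω
      simp_rw [e]
      rw [integral_add ((hSint T 2).fun_add ((hzi 1).const_mul 2)) (integrable_const _),
        integral_add (hSint T 2) ((hzi 1).const_mul 2), integral_const_mul, hz 1, h2]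
      simp
    · have e : ∀ ω, (ξ a ω + ∑ x ∈ T, ξ x ω) ^ 4
          = (∑ x ∈ T, ξ x ω) ^ 4 + 4 * ((∑ x ∈ T, ξ x ω) ^ 3 * ξ a ω)
            + 6 * (∑ x ∈ T, ξ x ω) ^ 2 + 4 * ((∑ x ∈ T, ξ x ω) ^ 1 * ξ a ω) + 1 := by
        intro ω
        linear_combination (ξ a ω ^ 2 + 1 + 4 * (∑ x ∈ T, ξ x ω) * ξ a ω
          + 6 * (∑ x ∈ T, ξ x ω) ^ 2) * ha2 ω
      simp_rw [e]
      have i1 := (hSint T 4)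
      have i2 := i1.fun_add ((hzi 3).const_mul 4)
      have i3 := i2.fun_add ((hSint T 2).const_mul 6)
      have i4 := i3.fun_add ((hzi 1).const_mul 4)
      rw [integral_add i4 (integrable_const _), integral_add i3 ((hzi 1).const_mul 4),
        integral_add i2 ((hSint T 2).const_mul 6), integral_add i1 ((hzi 3).const_mul 4)]
      simp only [integral_const_mul, hz, h2]
      simp
      nlinarith

theorem js_poly (u : ℝ) : u + u ^ 2 - u ^ 4 / 6 - 1 / 4 ≤ if 1 / 5 ≤ u then 4 else 0 := by
  split_ifs with h
  · nlinarith [sq_nonneg (u ^ 2 - 4), sq_nonneg (u - 2), sq_nonneg (u^2 - 2 * u)]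
  · push Not at h
    rcases le_or_gt u 0 with h0 | h0
    · have : 0 ≤ u ^ 4 / 6 - u ^ 2 - u := by
        have : 0 ≤ (-u) * (u + (- u) ^ 3 / 6 + 1) := by
          apply mul_nonneg (by linarith)
          nlinarith [mul_nonneg (show 0 ≤ -u by linarith) (sq_nonneg (-u - 3/2)), sq_nonneg (-u - 3/2)]
        nlinarith
      linarith
    · nlinarith [sq_nonneg (u ^ 2)]

theorem js_block {Ω ι : Type*} [MeasurableSpace Ω] (μ : Measure Ω) [IsProbabilityMeasure μ]
    (ξ : ι → Ω → ℝ) (hm : ∀ x, Measurable (ξ x)) (hind : iIndepFun ξ μ)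
    (hsq : ∀ x ω, ξ x ω = 1 ∨ ξ x ω = -1) (hmean : ∀ x, ∫ ω, ξ x ω ∂μ = 0) (T : Finset ι) :
    1 / 16 ≤ μ.real {ω | √(T.card : ℝ) / 5 ≤ ∑ x ∈ T, ξ x ω} := by
  obtain ⟨hi, h1, h2, h4⟩ := js_moments μ ξ hm hind hsq hmean T
  rcases T.eq_empty_or_nonempty with rfl | hT
  · norm_num
  have hq : (0 : ℝ) < T.card := by exact_mod_cast hT.card_pos
  set q : ℝ := (T.card : ℝ)
  have hr : 0 < √q := Real.sqrt_pos.2 hq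
  have hr2 : √q ^ 2 = q := Real.sq_sqrt hq.le
  set r := √q
  have hms : MeasurableSet {ω | r / 5 ≤ ∑ x ∈ T, ξ x ω} :=
    measurableSet_le measurable_const (Finset.measurable_fun_sum T fun x _ => hm x)
  have key : ∀ ω, r⁻¹ * (∑ x ∈ T, ξ x ω) + (r⁻¹) ^ 2 * (∑ x ∈ T, ξ x ω) ^ 2
      - ((r⁻¹) ^ 4 / 6) * (∑ x ∈ T, ξ x ω) ^ 4 - 1 / 4 ≤
      Set.indicator {ω | r / 5 ≤ ∑ x ∈ T, ξ x ω} (fun _ => (4 : ℝ)) ω := by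
    intro ω
    have := js_poly (r⁻¹ * ∑ x ∈ T, ξ x ω)
    have hiff : 1 / 5 ≤ r⁻¹ * (∑ x ∈ T, ξ x ω) ↔ r / 5 ≤ ∑ x ∈ T, ξ x ω := by
      rw [inv_mul_eq_div, le_div_iff₀ hr]; constructor <;> intro h <;> linarith
    simp only [hiff] at this
    simp only [Set.indicator, Set.mem_ofPred_eq]
    refine le_trans (le_of_eq ?_) this
    ring
  have j1 : Integrable (fun ω => r⁻¹ * (∑ x ∈ T, ξ x ω)) μ := by
    simpa using (hi 1).const_mul r⁻¹
  have j2 := j1.fun_add ((hi 2).const_mul (r⁻¹ ^ 2))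
  have j3 : Integrable (fun ω => r⁻¹ * (∑ x ∈ T, ξ x ω) + (r⁻¹) ^ 2 * (∑ x ∈ T, ξ x ω) ^ 2
      - ((r⁻¹) ^ 4 / 6) * (∑ x ∈ T, ξ x ω) ^ 4) μ :=
    Integrable.sub j2 ((hi 4).const_mul (r⁻¹ ^ 4 / 6))
  have j4 : Integrable (fun ω => r⁻¹ * (∑ x ∈ T, ξ x ω) + (r⁻¹) ^ 2 * (∑ x ∈ T, ξ x ω) ^ 2
      - ((r⁻¹) ^ 4 / 6) * (∑ x ∈ T, ξ x ω) ^ 4 - 1 / 4) μ :=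
    Integrable.sub j3 (integrable_const (1 / 4 : ℝ))
  have := integral_mono j4 ((integrable_const (4 : ℝ)).indicator hms) key
  rw [integral_indicator_const _ hms] at this
  rw [integral_sub j3 (integrable_const _), integral_sub j2 ((hi 4).const_mul _),
    integral_add j1 ((hi 2).const_mul _)] at this
  simp only [integral_const_mul, h1, h2, integral_const, probReal_univ, smul_eq_mul] at this
  have e2 : r⁻¹ ^ 2 * q = 1 := by rw [← hr2]; field_simp
  have e4 : r⁻¹ ^ 4 / 6 * (3 * q ^ 2) = 1 / 2 := by rw [← hr2]; field_simp; norm_num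
  have e4' := mul_le_mul_of_nonneg_left h4 (show 0 ≤ r⁻¹ ^ 4 / 6 by positivity)
  linarith

open scoped Classical in
theorem js_indep {Ω ι β γ δ : Type*} [MeasurableSpace Ω] [MeasurableSpace β] [MeasurableSpace γ]
    [MeasurableSpace δ] (μ : Measure Ω)
    (f : ι → Ω → β) (hm : ∀ x, Measurable (f x)) (hind : iIndepFun f μ) (b : β)
    (T U : Finset ι) (hTU : Disjoint T U) (Φ : (ι → β) → γ) (Ψ : (ι → β) → δ)
    (hΦ : Measurable Φ) (hΨ : Measurable Ψ) :
    IndepFun (fun ω => Φ (fun x => if x ∈ T then f x ω else b))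
      (fun ω => Ψ (fun x => if x ∈ U then f x ω else b)) μ := by
  have h := hind.indepFun_finset T U hTU hm
  have hme : ∀ T : Finset ι, Measurable
      (fun (w : T → β) (x : ι) => if h : x ∈ T then w ⟨x, h⟩ else b) := by
    intro T
    rw [measurable_pi_iff]
    intro x
    by_cases hx : x ∈ T
    · simp only [hx, dif_pos]; exact measurable_pi_apply _
    · simp only [hx, dif_neg, not_false_iff]; exact measurable_const
  have h2 := h.comp (hΦ.comp (hme T)) (hΨ.comp (hme U))
  convert h2 using 1 <;> (funext ω; simp only [Function.comp, dite_eq_ite])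

theorem js_tail {Ω ι : Type*} [MeasurableSpace Ω] (μ : Measure Ω) [IsProbabilityMeasure μ]
    (ξ : ι → Ω → ℝ) (hm : ∀ x, Measurable (ξ x)) (hind : iIndepFun ξ μ)
    (hsq : ∀ x ω, ξ x ω = 1 ∨ ξ x ω = -1) (hmean : ∀ x, ∫ ω, ξ x ω ∂μ = 0) (q : ℕ) (L : ℕ)
    (T : Finset ι) (hT : (L + 1) * q ≤ T.card) :
    (1 / 16 : ℝ) ^ (L + 1) ≤ μ.real {ω | (L + 1 : ℕ) * (√(q : ℝ) / 5) ≤ ∑ x ∈ T, ξ x ω} := by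
  classical
  induction L generalizing T with
  | zero =>
    have h := js_block μ ξ hm hind hsq hmean T
    simp only [zero_add, pow_one, Nat.cast_one, one_mul] at *
    refine h.trans (measureReal_mono ?_)
    intro ω hω
    simp only [Set.mem_ofPred_eq] at *
    have : √(q : ℝ) ≤ √(T.card : ℝ) := Real.sqrt_le_sqrt (by exact_mod_cast hT)
    linarith
  | succ L ih =>
    obtain ⟨U, hUT, hU⟩ := Finset.exists_subset_card_eq (s := T) (n := q) (by nlinarith)
    have h1 := js_block μ ξ hm hind hsq hmean U
    have hc : (T \ U).card = T.card - q := by rw [Finset.card_sdiff_of_subset hUT, hU]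
    have h2 := ih (T \ U) (by rw [hc]; apply Nat.le_sub_of_add_le; nlinarith)
    rw [hU] at h1
    have hI := js_indep μ ξ hm hind 0 U (T \ U) Finset.disjoint_sdiff
      (fun w => ∑ x ∈ U, w x) (fun w => ∑ x ∈ T \ U, w x) (by fun_prop) (by fun_prop)
    have e : ∀ (V : Finset ι) ω, (∑ x ∈ V, if x ∈ V then ξ x ω else 0) = ∑ x ∈ V, ξ x ω := by
      intro V ω; exact Finset.sum_congr rfl fun x hx => by simp [hx]
    simp only [e] at hI
    have h3 := hI.measure_inter_preimage_eq_mul (Set.Ici (√(q : ℝ) / 5))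
      (Set.Ici ((L + 1 : ℕ) * (√(q : ℝ) / 5))) measurableSet_Ici measurableSet_Ici
    have h4 : μ.real {ω | √(q : ℝ) / 5 ≤ ∑ x ∈ U, ξ x ω} *
        μ.real {ω | (L + 1 : ℕ) * (√(q : ℝ) / 5) ≤ ∑ x ∈ T \ U, ξ x ω} =
        μ.real ({ω | √(q : ℝ) / 5 ≤ ∑ x ∈ U, ξ x ω} ∩
          {ω | (L + 1 : ℕ) * (√(q : ℝ) / 5) ≤ ∑ x ∈ T \ U, ξ x ω}) := by
      unfold Measure.real
      rw [← ENNReal.toReal_mul]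
      exact congrArg _ h3.symm
    calc (1 / 16 : ℝ) ^ (L + 1 + 1) = (1 / 16) * (1 / 16) ^ (L + 1) := by ring
      _ ≤ _ := mul_le_mul h1 h2 (by positivity) measureReal_nonneg
      _ = _ := h4
      _ ≤ _ := by
        refine measureReal_mono ?_
        rintro ω ⟨ha, hb⟩
        simp only [Set.mem_ofPred_eq] at *
        rw [← Finset.sum_sdiff hUT]
        push_cast at *
        linarith

theorem js_layers {Ω ι κ : Type*} [MeasurableSpace Ω] (μ : Measure Ω) [IsProbabilityMeasure μ]
    (ξ : ι → Ω → ℝ) (hm : ∀ x, Measurable (ξ x)) (hind : iIndepFun ξ μ)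
    (L : κ → Finset ι) (hL : ∀ k l, k ≠ l → Disjoint (L k) (L l)) (s p : ℝ)
    (K : Finset κ) (hp : ∀ k ∈ K, p ≤ μ.real {ω | s ≤ ∑ x ∈ L k, ξ x ω}) :
    μ.real {ω | ∀ k ∈ K, ∑ x ∈ L k, ξ x ω < s} ≤ (1 - p) ^ K.card := by
  classical
  have hSm : ∀ T : Finset ι, Measurable (fun ω => ∑ x ∈ T, ξ x ω) := fun T =>
    Finset.measurable_fun_sum T fun x _ => hm x
  induction K using Finset.induction_on with
  | empty => simp
  | insert a K ha ih =>
    have ih := ih fun k hk => hp k (Finset.mem_insert_of_mem hk)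
    have hpa := hp a (Finset.mem_insert_self _ _)
    have hd : Disjoint (L a) (K.biUnion L) := by
      rw [Finset.disjoint_biUnion_right]
      intro k hk
      exact hL _ _ (by rintro rfl; exact ha hk)
    have hI := js_indep μ ξ hm hind 0 (L a) (K.biUnion L) hd
      (fun w => ∑ x ∈ L a, w x) (fun w (k : K) => ∑ x ∈ L k, w x) (by fun_prop) (by fun_prop)
    have e1 : ∀ ω, (∑ x ∈ L a, if x ∈ L a then ξ x ω else 0) = ∑ x ∈ L a, ξ x ω := by
      intro ω; exact Finset.sum_congr rfl fun x hx => by simp [hx]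
    have e2 : ∀ ω (k : K), (∑ x ∈ L k, if x ∈ K.biUnion L then ξ x ω else 0)
        = ∑ x ∈ L k, ξ x ω := by
      intro ω k; exact Finset.sum_congr rfl fun x hx => by
        rw [if_pos]; exact Finset.mem_biUnion.2 ⟨k, k.2, hx⟩
    simp only [e1, e2] at hI
    have h3 := hI.measure_inter_preimage_eq_mul (Set.Iio s)
      (Set.univ.pi fun _ => Set.Iio s) measurableSet_Iio
        (MeasurableSet.univ_pi fun _ => measurableSet_Iio)
    have h5 : μ.real ((fun ω => ∑ x ∈ L a, ξ x ω) ⁻¹' Set.Iio s) ≤ 1 - p := by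
      have : (fun ω => ∑ x ∈ L a, ξ x ω) ⁻¹' Set.Iio s = {ω | s ≤ ∑ x ∈ L a, ξ x ω}ᶜ := by
        ext ω; simp
      rw [this, probReal_compl_eq_one_sub (measurableSet_le measurable_const (hSm _))]
      linarith
    have h4 : {ω | ∀ k ∈ insert a K, ∑ x ∈ L k, ξ x ω < s} =
        (fun ω => ∑ x ∈ L a, ξ x ω) ⁻¹' Set.Iio s ∩
        (fun ω (k : K) => ∑ x ∈ L k, ξ x ω) ⁻¹' (Set.univ.pi fun _ => Set.Iio s) := by
      ext ω; simp [Set.mem_pi]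
    have h6 : {ω | ∀ k ∈ K, ∑ x ∈ L k, ξ x ω < s} =
        (fun ω (k : K) => ∑ x ∈ L k, ξ x ω) ⁻¹' (Set.univ.pi fun _ => Set.Iio s) := by
      ext ω; simp [Set.mem_pi]
    rw [h6] at ih
    rw [h4, Finset.card_insert_of_notMem ha, pow_succ']
    unfold Measure.real at *
    rw [h3, ENNReal.toReal_mul]
    exact mul_le_mul h5 ih ENNReal.toReal_nonneg (ENNReal.toReal_nonneg.trans h5)

theorem js_exists {Ω ι κ : Type*} [MeasurableSpace Ω] (μ : Measure Ω) [IsProbabilityMeasure μ]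
    (ξ : ι → Ω → ℝ) (hm : ∀ x, Measurable (ξ x)) (hind : iIndepFun ξ μ)
    (hsq : ∀ x ω, ξ x ω = 1 ∨ ξ x ω = -1) (hmean : ∀ x, ∫ ω, ξ x ω ∂μ = 0)
    (L : κ → Finset ι) (hL : ∀ k l, k ≠ l → Disjoint (L k) (L l))
    (K : Finset κ) (n : ℕ) (hK : 1 ≤ K.card) (hn : ∀ k ∈ K, (L k).card = n) :
    1 / 17 ≤ μ.real {ω | ∃ k ∈ K, (Nat.log 16 K.card + 1 : ℕ) *
      (√((n / (Nat.log 16 K.card + 1) : ℕ) : ℝ) / 5) ≤ ∑ x ∈ L k, ξ x ω} := by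
  classical
  set M := K.card
  set l := Nat.log 16 M
  have h1 := js_layers μ ξ hm hind L hL ((l + 1 : ℕ) * (√((n / (l + 1) : ℕ) : ℝ) / 5))
    ((1 / 16) ^ (l + 1)) K (fun k hk => js_tail μ ξ hm hind hsq hmean (n / (l + 1)) l (L k)
      (by rw [hn k hk]; exact Nat.mul_div_le n (l + 1)))
  have hSm : ∀ T : Finset ι, Measurable (fun ω => ∑ x ∈ T, ξ x ω) := fun T =>
    Finset.measurable_fun_sum T fun x _ => hm x
  set s := ((l + 1 : ℕ) * (√((n / (l + 1) : ℕ) : ℝ) / 5))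
  have e : {ω | ∃ k ∈ K, s ≤ ∑ x ∈ L k, ξ x ω} = {ω | ∀ k ∈ K, ∑ x ∈ L k, ξ x ω < s}ᶜ := by
    ext ω; simp
  have hms : MeasurableSet {ω | ∀ k ∈ K, ∑ x ∈ L k, ξ x ω < s} := by
    have : {ω | ∀ k ∈ K, ∑ x ∈ L k, ξ x ω < s} = ⋂ k ∈ K, {ω | ∑ x ∈ L k, ξ x ω < s} := by
      ext ω; simp
    rw [this]
    exact Finset.measurableSet_biInter K fun k _ => measurableSet_lt (hSm _) measurable_const
  rw [e, probReal_compl_eq_one_sub hms]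
  have hM : (0 : ℝ) < M := by exact_mod_cast hK
  have hp : 1 / (16 * (M : ℝ)) ≤ (1 / 16 : ℝ) ^ (l + 1) := by
    have : (16 : ℝ) ^ l ≤ M := by
      have := Nat.pow_log_le_self 16 (x := M) (by lia)
      exact_mod_cast this
    rw [div_pow, one_pow, pow_succ]
    apply one_div_le_one_div_of_le (by positivity)
    linarith
  have hp1 : (1 / 16 : ℝ) ^ (l + 1) ≤ 1 := pow_le_one₀ (by norm_num) (by norm_num)
  have h2 : (1 - (1 / 16 : ℝ) ^ (l + 1)) ^ M ≤ 16 / 17 := by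
    have h3 : 1 - (1 / 16 : ℝ) ^ (l + 1) ≤ Real.exp (-(1 / (16 * (M : ℝ)))) := by
      have := Real.add_one_le_exp (-(1 / (16 * (M : ℝ))))
      linarith
    calc _ ≤ Real.exp (-(1 / (16 * (M : ℝ)))) ^ M := pow_le_pow_left₀ (by linarith) h3 M
      _ = Real.exp (-(1 / 16)) := by
        rw [← Real.exp_nat_mul]; congr 1; field_simp
      _ ≤ 16 / 17 := by
        rw [Real.exp_neg, inv_le_comm₀ (Real.exp_pos _) (by norm_num)]
        have := Real.add_one_le_exp (1 / 16)
        norm_num at *; linarith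
  linarith

/-- The law of the point in the cube `x`. -/
def jmu (m d : ℕ) (x : Fin d → Fin m) : Measure (Fin d → ℝ) :=
  ((m : ENNReal) ^ d) • volume.restrict (jitterCube m d x)

theorem jm_cube (m d : ℕ) (x : Fin d → Fin m) : MeasurableSet (jitterCube m d x) :=
  MeasurableSet.univ_pi fun _ => measurableSet_Ico

theorem jm_box (d : ℕ) (y : Fin d → ℝ) : MeasurableSet (anchoredBox d y) :=
  MeasurableSet.univ_pi fun _ => measurableSet_Ico

theorem jmu_apply (m d : ℕ) (x : Fin d → Fin m) (B : Set (Fin d → ℝ)) :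
    jmu m d x B = (m : ENNReal) ^ d * volume (B ∩ jitterCube m d x) := by
  rw [jmu, Measure.smul_apply, Measure.restrict_apply' (jm_cube m d x), smul_eq_mul]

theorem jmu_congr (m d : ℕ) (x : Fin d → Fin m) (B B' : Set (Fin d → ℝ))
    (h : ∀ p ∈ jitterCube m d x, p ∈ B ↔ p ∈ B') : jmu m d x B = jmu m d x B' := by
  rw [jmu_apply, jmu_apply]
  congr 2
  ext p
  constructor
  · rintro ⟨h1, h2⟩; exact ⟨(h p h2).1 h1, h2⟩
  · rintro ⟨h1, h2⟩; exact ⟨(h p h2).2 h1, h2⟩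

theorem jmu_prob (m d : ℕ) (hm : 1 ≤ m) (x : Fin d → Fin m) :
    IsProbabilityMeasure (jmu m d x) := by
  constructor
  rw [jmu_apply, Set.univ_inter, jitterCube, Real.volume_pi_Ico]
  have hm' : (0 : ℝ) < m := by exact_mod_cast hm
  simp only [add_sub_cancel_left, Finset.prod_const, Finset.card_univ, Fintype.card_fin]
  rw [← mul_pow, ← ENNReal.ofReal_natCast, ← ENNReal.ofReal_mul hm'.le]
  rw [mul_one_div_cancel hm'.ne']; simp

theorem jmu_half (m d : ℕ) (hm : 1 ≤ m) (x : Fin d → Fin m) (i : Fin d) :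
    jmu m d x {p | p i < ((x i : ℝ) + 1 / 2) / m} = ENNReal.ofReal (1 / 2) := by
  have hm' : (0 : ℝ) < m := by exact_mod_cast hm
  have e : {p : Fin d → ℝ | p i < ((x i : ℝ) + 1 / 2) / m} ∩ jitterCube m d x =
      Set.univ.pi fun j => Set.Ico ((x j : ℝ) / m)
        ((x j : ℝ) / m + (1 / m) * (if j = i then 1 / 2 else 1)) := by
    ext p
    simp only [jitterCube, Set.mem_inter_iff, Set.mem_ofPred_eq, Set.mem_pi, Set.mem_univ,
      true_implies, Set.mem_Ico]
    have e1 : ((x i : ℝ) + 1 / 2) / m = (x i : ℝ) / m + (1 / m) * (1 / 2) := by ring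
    have e2 : (0 : ℝ) < 1 / m := by positivity
    rw [e1]
    constructor
    · rintro ⟨h1, h2⟩ j
      refine ⟨(h2 j).1, ?_⟩
      split_ifs with hj
      · subst hj; exact h1
      · rw [mul_one]; exact (h2 j).2
    · intro h
      refine ⟨by simpa using (h i).2, fun j => ⟨(h j).1, ?_⟩⟩
      have := (h j).2
      split_ifs at this <;> linarith
  rw [jmu_apply, e, Real.volume_pi_Ico]
  simp only [add_sub_cancel_left]
  rw [← ENNReal.ofReal_prod_of_nonneg (fun j _ => by split_ifs <;> positivity),
    Finset.prod_mul_distrib, Finset.prod_ite_eq' Finset.univ i]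
  simp only [Finset.prod_const, Finset.card_univ, Fintype.card_fin, Finset.mem_univ, if_true]
  rw [← ENNReal.ofReal_natCast, ← ENNReal.ofReal_pow hm'.le, ← ENNReal.ofReal_mul (by positivity)]
  congr 1
  rw [← mul_assoc, ← mul_pow, mul_one_div_cancel hm'.ne']; simp

theorem jdisc_eq (m d : ℕ) (P : (Fin d → Fin m) → (Fin d → ℝ)) (B : Set (Fin d → ℝ)) :
    jdisc m d P B = ∑ x, B.indicator (fun _ => (1 : ℝ)) (P x) - (m : ℝ) ^ d * (volume B).toReal := by
  classical
  unfold jdisc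
  congr 1
  rw [Finset.card_filter]
  push_cast
  refine Finset.sum_congr rfl fun x _ => ?_
  simp [Set.indicator]

theorem jdisc_ge (m d : ℕ) (hm : 1 ≤ m) (P : (Fin d → Fin m) → (Fin d → ℝ)) (y : Fin d → ℝ)
    (hy : ∀ i, y i ∈ Set.Ico (0 : ℝ) 1) :
    ∑ x, ((anchoredBox d y).indicator (fun _ => (1 : ℝ)) (P x) - (jmu m d x).real (anchoredBox d y))
      ≤ jdisc m d P (anchoredBox d y) := by
  classical
  have hm' : (0 : ℝ) < m := by exact_mod_cast hm
  rw [jdisc_eq, Finset.sum_sub_distrib]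
  gcongr
  have hcov : anchoredBox d y ⊆ ⋃ x ∈ (Finset.univ : Finset (Fin d → Fin m)),
      (anchoredBox d y ∩ jitterCube m d x) := by
    intro p hp
    have hp' : ∀ i, 0 ≤ p i ∧ p i < y i := by simpa [anchoredBox, Set.mem_pi] using hp
    have hlt : ∀ i, ⌊(m : ℝ) * p i⌋₊ < m := by
      intro i
      rw [Nat.floor_lt (mul_nonneg hm'.le (hp' i).1)]
      nlinarith [(hp' i).2, (hy i).2]
    simp only [Set.mem_iUnion, Finset.mem_univ, exists_true_left]
    refine ⟨fun i => ⟨⌊(m : ℝ) * p i⌋₊, hlt i⟩, hp, ?_⟩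
    simp only [jitterCube, Set.mem_pi, Set.mem_univ, true_implies, Set.mem_Ico]
    intro i
    have h1 := Nat.floor_le (mul_nonneg hm'.le (hp' i).1)
    have h2 := Nat.lt_floor_add_one ((m : ℝ) * p i)
    constructor
    · rw [div_le_iff₀ hm']; linarith
    · rw [← add_div, lt_div_iff₀ hm']; linarith
  have h1 : volume (anchoredBox d y) ≤ ∑ x, volume (anchoredBox d y ∩ jitterCube m d x) :=
    (measure_mono hcov).trans (measure_biUnion_finset_le _ _)
  have h2 : (m : ENNReal) ^ d * volume (anchoredBox d y) ≤ ∑ x, jmu m d x (anchoredBox d y) := by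
    simp_rw [jmu_apply, ← Finset.mul_sum]
    gcongr
  have := fun x => jmu_prob m d hm x
  have h3 := ENNReal.toReal_mono (ENNReal.sum_ne_top.2 fun x _ => measure_ne_top _ _) h2
  rw [ENNReal.toReal_mul, ENNReal.toReal_sum fun x _ => measure_ne_top _ _] at h3
  simpa [Measure.real] using h3

theorem jdisc_box (m d : ℕ) (P : (Fin d → Fin m) → (Fin d → ℝ)) (y : Fin d → ℝ)
    (hy : ∀ i, 0 ≤ y i) :
    jdisc m d P (anchoredBox d y) =
      ∑ x, (anchoredBox d y).indicator (fun _ => (1 : ℝ)) (P x) - (m : ℝ) ^ d * ∏ i, y i := by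
  rw [jdisc_eq, anchoredBox, Real.volume_pi_Ico_toReal (a := fun _ => 0) (b := y) hy]
  simp

theorem jdisc_abs_le (m d : ℕ) (P : (Fin d → Fin m) → (Fin d → ℝ)) (y : Fin d → ℝ)
    (hy : ∀ i, y i ∈ Set.Ico (0 : ℝ) 1) :
    |jdisc m d P (anchoredBox d y)| ≤ (m : ℝ) ^ d := by
  rw [jdisc_box m d P y fun i => (hy i).1]
  have h1 : 0 ≤ ∑ x, (anchoredBox d y).indicator (fun _ => (1 : ℝ)) (P x) :=
    Finset.sum_nonneg fun x _ => Set.indicator_nonneg (by simp) _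
  have h2 : ∑ x, (anchoredBox d y).indicator (fun _ => (1 : ℝ)) (P x) ≤ (m : ℝ) ^ d := by
    calc _ ≤ ∑ x : Fin d → Fin m, (1 : ℝ) :=
          Finset.sum_le_sum fun x _ => by
            simp only [Set.indicator]; split_ifs <;> norm_num
      _ = _ := by simp
  have h3 : 0 ≤ ∏ i, y i := Finset.prod_nonneg fun i _ => (hy i).1
  have h4 : ∏ i, y i ≤ 1 := Finset.prod_le_one (fun i _ => (hy i).1) fun i _ => (hy i).2.le
  have h5 : (0 : ℝ) ≤ (m : ℝ) ^ d := by positivity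
  rw [abs_le]
  constructor <;> nlinarith

theorem jdisc_le_star (m d : ℕ) (P : (Fin d → Fin m) → (Fin d → ℝ)) (y : Fin d → ℝ)
    (hy : ∀ i, y i ∈ Set.Ico (0 : ℝ) 1) :
    |jdisc m d P (anchoredBox d y)| ≤ starDisc m d P := by
  unfold starDisc
  refine le_ciSup (f := fun y : {y : Fin d → ℝ // ∀ i, y i ∈ Set.Ico (0 : ℝ) 1} =>
    |jdisc m d P (anchoredBox d y.1)|) ⟨(m : ℝ) ^ d, ?_⟩ ⟨y, hy⟩
  rintro _ ⟨z, rfl⟩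
  exact jdisc_abs_le m d P z.1 z.2

theorem star_eq (m d : ℕ) (P : (Fin d → Fin m) → (Fin d → ℝ)) :
    starDisc m d P = ⨆ q : {q : Fin d → ℚ // ∀ i, (q i : ℝ) ∈ Set.Ico (0 : ℝ) 1},
      |jdisc m d P (anchoredBox d fun i => (q.1 i : ℝ))| := by
  have hbdd : BddAbove (Set.range fun q : {q : Fin d → ℚ // ∀ i, (q i : ℝ) ∈ Set.Ico (0 : ℝ) 1} =>
      |jdisc m d P (anchoredBox d fun i => (q.1 i : ℝ))|) := by
    refine ⟨(m : ℝ) ^ d, ?_⟩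
    rintro _ ⟨z, rfl⟩
    exact jdisc_abs_le m d P _ z.2
  have : Nonempty {q : Fin d → ℚ // ∀ i, (q i : ℝ) ∈ Set.Ico (0 : ℝ) 1} :=
    ⟨⟨fun _ => 0, by simp⟩⟩
  have : Nonempty {y : Fin d → ℝ // ∀ i, y i ∈ Set.Ico (0 : ℝ) 1} :=
    ⟨⟨fun _ => 0, by simp⟩⟩
  apply le_antisymm
  · refine ciSup_le fun ⟨y, hy⟩ => ?_
    choose u hu1 hu2 hu3 using fun i => Real.exists_seq_rat_strictMono_tendsto (y i)
    set v : ℕ → Fin d → ℚ := fun n i => max 0 (u i n)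
    have hv0 : ∀ n i, (0 : ℝ) ≤ v n i := fun n i => by
      exact_mod_cast le_max_left 0 (u i n)
    have hvy : ∀ n i, (v n i : ℝ) ≤ y i := fun n i => by
      simp only [v, Rat.cast_max, Rat.cast_zero, max_le_iff]
      exact ⟨(hy i).1, (hu2 i n).le⟩
    have hlim : ∀ i, Filter.Tendsto (fun n => (v n i : ℝ)) Filter.atTop (nhds (y i)) := by
      intro i
      simp only [v, Rat.cast_max, Rat.cast_zero]
      have := (tendsto_const_nhds (x := (0 : ℝ))).max (hu3 i)
      rwa [max_eq_right (hy i).1] at this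
    have hmem : ∀ n i, (v n i : ℝ) ∈ Set.Ico (0 : ℝ) 1 := fun n i =>
      ⟨hv0 n i, (hvy n i).trans_lt (hy i).2⟩
    have hT : Filter.Tendsto (fun n => |jdisc m d P (anchoredBox d fun i => (v n i : ℝ))|)
        Filter.atTop (nhds |jdisc m d P (anchoredBox d y)|) := by
      apply Filter.Tendsto.abs
      rw [jdisc_box m d P y fun i => (hy i).1]
      simp_rw [fun n => jdisc_box m d P (fun i => (v n i : ℝ)) (hv0 n)]
      refine Filter.Tendsto.sub (tendsto_finsetSum _ fun x _ => ?_)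
        ((tendsto_finsetProd _ fun i _ => hlim i).const_mul _)
      apply tendsto_nhds_of_eventually_eq
      by_cases hx : P x ∈ anchoredBox d y
      · have hx' : ∀ i, 0 ≤ P x i ∧ P x i < y i := by simpa [anchoredBox, Set.mem_pi] using hx
        have : ∀ᶠ n in Filter.atTop, ∀ i, P x i < v n i :=
          Filter.eventually_all.2 fun i => (hlim i).eventually (lt_mem_nhds (hx' i).2)
        filter_upwards [this] with n hn
        rw [Set.indicator_of_mem hx, Set.indicator_of_mem]
        simp only [anchoredBox, Set.mem_pi, Set.mem_univ, true_implies, Set.mem_Ico]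
        exact fun i => ⟨(hx' i).1, hn i⟩
      · refine Filter.Eventually.of_forall fun n => ?_
        rw [Set.indicator_of_notMem hx, Set.indicator_of_notMem]
        intro h
        apply hx
        simp only [anchoredBox, Set.mem_pi, Set.mem_univ, true_implies, Set.mem_Ico] at h ⊢
        exact fun i => ⟨(h i).1, (h i).2.trans_le (hvy n i)⟩
    refine le_of_tendsto' hT fun n => ?_
    exact le_ciSup (f := fun q : {q : Fin d → ℚ // ∀ i, (q i : ℝ) ∈ Set.Ico (0 : ℝ) 1} =>
      |jdisc m d P (anchoredBox d fun i => (q.1 i : ℝ))|) hbdd ⟨v n, hmem n⟩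
  · exact ciSup_le fun q => jdisc_le_star m d P _ q.2

theorem star_meas (m d : ℕ) : Measurable (starDisc m d) := by
  have : starDisc m d = fun P => ⨆ q : {q : Fin d → ℚ // ∀ i, (q i : ℝ) ∈ Set.Ico (0 : ℝ) 1},
      |jdisc m d P (anchoredBox d fun i => (q.1 i : ℝ))| := funext fun P => star_eq m d P
  rw [this]
  refine Measurable.iSup fun q => ?_
  simp_rw [jdisc_eq, ← Real.norm_eq_abs]
  refine Measurable.norm (Measurable.sub_const (Finset.measurable_fun_sum _ fun x _ => ?_) _)
  exact (measurable_const.indicator (jm_box d _)).comp (measurable_pi_apply x)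

theorem jit_eq (m d : ℕ) : jitterMeasure m d = Measure.pi (jmu m d) := rfl

theorem star_int (m d : ℕ) (hm : 1 ≤ m) : Integrable (starDisc m d) (jitterMeasure m d) := by
  have := fun x => jmu_prob m d hm x
  rw [jit_eq]
  refine Integrable.of_bound (star_meas m d).aestronglyMeasurable ((m : ℝ) ^ d)
    (Filter.Eventually.of_forall fun P => ?_)
  have : Nonempty {y : Fin d → ℝ // ∀ i, y i ∈ Set.Ico (0 : ℝ) 1} :=
    ⟨⟨fun _ => 0, by simp⟩⟩
  have h0 : 0 ≤ starDisc m d P :=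
    (abs_nonneg _).trans (jdisc_le_star m d P (fun _ => 0) (by simp))
  rw [Real.norm_eq_abs, abs_of_nonneg h0]
  exact ciSup_le fun y => jdisc_abs_le m d P y.1 y.2

theorem js_numeric (m d : ℕ) (hd : 2 ≤ d) (hdm : d ≤ m) :
    (1 / 850) * Real.sqrt ((d : ℝ) * (m : ℝ) ^ d) *
        Real.sqrt ((1 + Real.log ((m : ℝ) / d)) / ((m : ℝ) / d)) ≤
    d * (((Nat.log 16 (m / d) + 1 : ℕ) * (√(((m - m / d) ^ (d - 1) /
      (Nat.log 16 (m / d) + 1) : ℕ) : ℝ) / 5)) / 2 * (1 / 17)) := by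
  have hM1 : 1 ≤ m / d := (Nat.one_le_div_iff (by lia)).2 hdm
  have hMd : m / d * d ≤ m := Nat.div_mul_le_self m d
  have hMd2 : m < (m / d + 1) * d := Nat.lt_mul_of_div_lt (by lia) (by lia)
  set M := m / d
  set l := Nat.log 16 M
  obtain ⟨A, hA⟩ : ∃ A, A = m - M := ⟨_, rfl⟩
  have hMA : M + A = m := by
    have : M ≤ m := by nlinarith
    lia
  rw [← hA]
  set n := A ^ (d - 1)
  have hMA2 : M ≤ A := by nlinarith
  have hnA : A ≤ n := Nat.le_self_pow (by lia) A
  have hlM : l + 1 ≤ M := Nat.log_lt_self 16 (by lia)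
  have hln : l + 1 ≤ n := by lia
  set q := n / (l + 1)
  have hq1 : 1 ≤ q := (Nat.one_le_div_iff (by lia)).2 hln
  have hq2 : n < (q + 1) * (l + 1) := Nat.lt_mul_of_div_lt (by lia) (by lia)
  have hq3 : (n : ℝ) ≤ 2 * q * (l + 1 : ℕ) := by
    have : n ≤ 2 * q * (l + 1) := by nlinarith
    exact_mod_cast this
  have hd' : (2 : ℝ) ≤ d := by exact_mod_cast hd
  have hm' : (0 : ℝ) < m := by exact_mod_cast (by lia : 0 < m)
  have hL0 : (0 : ℝ) ≤ (l + 1 : ℕ) := by positivity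
  have hL1 : (1 : ℝ) ≤ (l + 1 : ℕ) := by exact_mod_cast (by lia : 1 ≤ l + 1)
  -- logarithm
  have hlog : 1 + Real.log ((m : ℝ) / d) ≤ 4 * (l + 1 : ℕ) := by
    have h1 : (m : ℝ) / d ≤ 16 ^ (l + 1) := by
      have h2 : M + 1 ≤ 16 ^ (l + 1) := Nat.lt_pow_succ_log_self (by norm_num) M
      have h3 : (m : ℝ) ≤ (M + 1) * d := by exact_mod_cast hMd2.le
      have h4 : (M + 1 : ℝ) ≤ 16 ^ (l + 1) := by exact_mod_cast h2
      rw [div_le_iff₀ (by linarith)]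
      exact h3.trans (by gcongr)
    have h2 := Real.log_le_log (by positivity) h1
    rw [Real.log_pow] at h2
    have h3 : Real.log 16 ≤ 3 := by
      have : Real.log 16 = 4 * Real.log 2 := by
        rw [show (16 : ℝ) = 2 ^ 4 by norm_num, Real.log_pow]; norm_num
      have := Real.log_two_lt_d9
      linarith
    have := mul_le_mul_of_nonneg_left h3 hL0
    linarith
  have hlog0 : 0 ≤ Real.log ((m : ℝ) / d) := by
    apply Real.log_nonneg
    rw [one_le_div (by linarith)]
    exact_mod_cast hdm
  -- power
  have hpow : (m : ℝ) ^ (d - 1) ≤ 3 * n := by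
    have h1 : (m : ℝ) ≤ A * Real.exp (1 / ((d - 1 : ℕ) : ℝ)) := by
      have hd1 : ((d - 1 : ℕ) : ℝ) = d - 1 := by rw [Nat.cast_sub (by lia)]; simp
      have h2 := Real.add_one_le_exp (1 / ((d - 1 : ℕ) : ℝ))
      have h3 : (m : ℝ) ≤ A * (1 / ((d - 1 : ℕ) : ℝ) + 1) := by
        rw [hd1]
        have h4 : (M : ℝ) * d ≤ m := by exact_mod_cast hMd
        have h5 : (M : ℝ) + A = m := by exact_mod_cast hMA
        have h6 : (0 : ℝ) < d - 1 := by linarith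
        rw [div_add_one h6.ne', mul_div_assoc', le_div_iff₀ h6]
        nlinarith
      exact h3.trans (by gcongr)
    calc (m : ℝ) ^ (d - 1) ≤ (A * Real.exp (1 / ((d - 1 : ℕ) : ℝ))) ^ (d - 1) := by gcongr
      _ = n * Real.exp 1 := by
        rw [mul_pow, ← Real.exp_nat_mul, mul_one_div_cancel]
        · simp [n]
        · exact_mod_cast (by lia : d - 1 ≠ 0)
      _ ≤ 3 * n := by
        have := Real.exp_one_lt_d9
        have : (0 : ℝ) ≤ n := by positivity
        nlinarith
  set s : ℝ := (l + 1 : ℕ) * (√(q : ℝ) / 5)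
  have hs0 : 0 ≤ s := by positivity
  have hs2 : (n : ℝ) * (l + 1 : ℕ) ≤ 50 * s ^ 2 := by
    have : s ^ 2 = (l + 1 : ℕ) ^ 2 * q / 25 := by
      simp only [s]
      rw [mul_pow, div_pow, Real.sq_sqrt (by positivity)]; ring
    rw [this]
    nlinarith
  rw [mul_assoc, ← Real.sqrt_mul (by positivity)]
  have hX : (d : ℝ) * (m : ℝ) ^ d * ((1 + Real.log ((m : ℝ) / d)) / ((m : ℝ) / d)) ≤
      (25 * d * s) ^ 2 := by
    have e : (m : ℝ) ^ d = m * m ^ (d - 1) := by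
      rw [← pow_succ', Nat.sub_add_cancel (by lia)]
    have e2 : (d : ℝ) * (m : ℝ) ^ d * ((1 + Real.log ((m : ℝ) / d)) / ((m : ℝ) / d)) =
        d ^ 2 * (m ^ (d - 1) * (1 + Real.log ((m : ℝ) / d))) := by
      rw [e]; field_simp
    rw [e2]
    have h1 : (m : ℝ) ^ (d - 1) * (1 + Real.log ((m : ℝ) / d)) ≤ (3 * n) * (4 * (l + 1 : ℕ)) :=
      mul_le_mul hpow hlog (by linarith) (by positivity)
    have h2 : (m : ℝ) ^ (d - 1) * (1 + Real.log ((m : ℝ) / d)) ≤ 625 * s ^ 2 := by nlinarith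
    calc _ ≤ (d : ℝ) ^ 2 * (625 * s ^ 2) := by gcongr
      _ = _ := by ring
  have hY := Real.sqrt_le_sqrt hX
  rw [Real.sqrt_sq (by positivity)] at hY
  linarith

/-- Sign of a bit. -/
def jsgn (b : Bool) : ℝ := if b then 1 else -1

/-- The bit telling whether `p` is in the lower half of the cube `x` in direction `i`. -/
def jbit (m d : ℕ) (x : Fin d → Fin m) (p : Fin d → ℝ) (i : Fin d) : Bool :=
  open scoped Classical in decide (p i < ((x i : ℝ) + 1 / 2) / m)

theorem jbit_meas (m d : ℕ) (x : Fin d → Fin m) (i : Fin d) :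
    Measurable (fun p => jbit m d x p i) := by
  refine measurable_to_bool ?_
  have : (fun p => jbit m d x p i) ⁻¹' {true} = {p | p i < ((x i : ℝ) + 1 / 2) / m} := by
    ext p; simp [jbit]
  rw [this]
  exact measurableSet_lt (measurable_pi_apply i) measurable_const

open scoped Classical in
/-- The part of the layer `x i = k` with all other coordinates small. -/
def jlayer (m d A : ℕ) (i : Fin d) (k : Fin m) : Finset (Fin d → Fin m) :=
  Finset.univ.filter fun x => x i = k ∧ ∀ j, j ≠ i → (x j : ℕ) < A

open scoped Classical in
/-- The cubes beyond `A` in direction `i` only. -/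
def jside (m d A : ℕ) (i : Fin d) : Finset (Fin d → Fin m) :=
  Finset.univ.filter fun x => A ≤ (x i : ℕ) ∧ ∀ j, j ≠ i → (x j : ℕ) < A

theorem jlayer_card (m d A : ℕ) (hA : A < m) (i : Fin d) (k : Fin m) :
    (jlayer m d A i k).card = A ^ (d - 1) := by
  classical
  have e : jlayer m d A i k = Fintype.piFinset fun j => if j = i then {k} else
      Finset.Iio (⟨A, hA⟩ : Fin m) := by
    ext x
    simp only [jlayer, Finset.mem_filter, Finset.mem_univ, true_and, Fintype.mem_piFinset]
    constructor
    · rintro ⟨h1, h2⟩ j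
      split_ifs with hj
      · subst hj; simpa using h1
      · simpa [Fin.lt_def] using h2 j hj
    · intro h
      refine ⟨by simpa using h i, fun j hj => ?_⟩
      simpa [hj, Fin.lt_def] using h j
  rw [e, Fintype.card_piFinset]
  have : ∀ j, (if j = i then ({k} : Finset (Fin m)) else Finset.Iio (⟨A, hA⟩ : Fin m)).card =
      if j = i then 1 else A := by
    intro j; split_ifs <;> simp
  simp only [this]
  rw [Finset.prod_ite]
  simp [Finset.filter_ne']

open scoped Classical in
/-- Pick an index satisfying `Q`, if there is one. -/
def jpick (m A : ℕ) (hA : A < m) (Q : Fin m → Prop) : Fin (2 * m) :=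
  if h : ∃ k : Fin m, Q k then ⟨2 * (h.choose : ℕ) + 1, by have := h.choose.2; lia⟩
  else ⟨2 * A, by lia⟩

/-- The choice of the corner of the box, in units of `1/(2m)`. -/
def jchoice (m d A : ℕ) (hA : A < m) (s : ℝ) (W : (Fin d → Fin m) → Fin d → Bool) :
    Fin d → Fin (2 * m) := fun i =>
  jpick m A hA fun k => A ≤ (k : ℕ) ∧ s ≤ ∑ x ∈ jlayer m d A i k, jsgn (W x i)

/-- Corner. -/
def jcorner (m d : ℕ) (c : Fin d → Fin (2 * m)) : Fin d → ℝ := fun i => (c i : ℝ) / (2 * m)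

theorem jcorner_mem (m d : ℕ) (c : Fin d → Fin (2 * m)) (i : Fin d) :
    jcorner m d c i ∈ Set.Ico (0 : ℝ) 1 := by
  have h := (c i).2
  have h' : ((c i : ℕ) : ℝ) < 2 * m := by exact_mod_cast h
  have h0 : (0 : ℝ) ≤ (c i : ℕ) := by positivity
  refine ⟨by unfold jcorner; positivity, ?_⟩
  unfold jcorner
  rw [div_lt_one (by linarith)]
  exact h'

/-- The centred contribution of the cube `x`. -/
def jterm (m d : ℕ) (x : Fin d → Fin m) (c : Fin d → Fin (2 * m)) (p : Fin d → ℝ) : ℝ :=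
  (anchoredBox d (jcorner m d c)).indicator (fun _ => (1 : ℝ)) p -
    (jmu m d x).real (anchoredBox d (jcorner m d c))

theorem jterm_side (m d A : ℕ) (hm : 1 ≤ m) (i : Fin d) (x : Fin d → Fin m)
    (hx : x ∈ jside m d A i)
    (c : Fin d → Fin (2 * m)) (hc : ∀ j, 2 * A ≤ (c j : ℕ)) (p : Fin d → ℝ)
    (hp : p ∈ jitterCube m d x) :
    jterm m d x c p = if (c i : ℕ) = 2 * (x i : ℕ) + 1 then jsgn (jbit m d x p i) / 2 else 0 := by
  classical
  have := jmu_prob m d hm x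
  have hm' : (0 : ℝ) < m := by exact_mod_cast hm
  simp only [jside, Finset.mem_filter, Finset.mem_univ, true_and] at hx
  obtain ⟨hx1, hx2⟩ := hx
  have hcube : ∀ p ∈ jitterCube m d x, ∀ j, (x j : ℝ) / m ≤ p j ∧ p j < ((x j : ℝ) + 1) / m := by
    intro p hp j
    have := hp j (Set.mem_univ j)
    rw [add_div]
    exact this
  have hiff : ∀ p ∈ jitterCube m d x, p ∈ anchoredBox d (jcorner m d c) ↔
      p i < (c i : ℝ) / (2 * m) := by
    intro p hp
    simp only [anchoredBox, jcorner, Set.mem_pi, Set.mem_univ, true_implies, Set.mem_Ico]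
    constructor
    · intro h; exact (h i).2
    · intro h j
      obtain ⟨h1, h2⟩ := hcube p hp j
      refine ⟨le_trans (by positivity) h1, ?_⟩
      by_cases hj : j = i
      · subst hj; exact h
      · refine h2.trans_le ?_
        have h3 : 2 * ((x j : ℕ) + 1) ≤ (c j : ℕ) := by
          have := hx2 j hj; have := hc j; lia
        have h4 : 2 * (((x j : ℕ) : ℝ) + 1) ≤ (c j : ℕ) := by exact_mod_cast h3
        rw [div_le_div_iff₀ hm' (by positivity)]
        nlinarith
  unfold jterm
  rcases lt_trichotomy (c i : ℕ) (2 * (x i : ℕ) + 1) with h | h | h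
  · rw [if_neg h.ne]
    have hout : ∀ p ∈ jitterCube m d x, p ∈ anchoredBox d (jcorner m d c) ↔ p ∈ (∅ : Set _) := by
      intro p hp
      rw [hiff p hp]
      simp only [Set.mem_empty_iff_false, iff_false, not_lt]
      refine le_trans ?_ (hcube p hp i).1
      have h4 : ((c i : ℕ) : ℝ) ≤ 2 * ((x i : ℕ) : ℝ) := by exact_mod_cast (by lia)
      rw [div_le_div_iff₀ (by positivity) hm']
      nlinarith
    rw [Set.indicator_of_notMem (by rw [hout p hp]; simp), Measure.real, jmu_congr _ _ _ _ _ hout]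
    simp
  · rw [if_pos h]
    have e : ((c i : ℕ) : ℝ) / (2 * m) = ((x i : ℝ) + 1 / 2) / m := by
      rw [h]; push_cast; field_simp
    rw [e] at hiff
    have hh : (jmu m d x).real (anchoredBox d (jcorner m d c)) = 1 / 2 := by
      rw [Measure.real, jmu_congr m d x _ {p | p i < ((x i : ℝ) + 1 / 2) / m} hiff,
        jmu_half m d hm x i, ENNReal.toReal_ofReal (by norm_num)]
    rw [hh]
    by_cases hb : p i < ((x i : ℝ) + 1 / 2) / m
    · rw [Set.indicator_of_mem ((hiff p hp).2 hb)]
      simp only [jbit, jsgn, hb, decide_true, if_true]; norm_num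
    · rw [Set.indicator_of_notMem (fun h => hb ((hiff p hp).1 h))]
      simp only [jbit, jsgn, hb, decide_false]; norm_num
  · rw [if_neg h.ne']
    have hin : ∀ p ∈ jitterCube m d x, p ∈ anchoredBox d (jcorner m d c) ↔
        p ∈ (Set.univ : Set _) := by
      intro p hp
      rw [hiff p hp]
      simp only [Set.mem_univ, iff_true]
      refine (hcube p hp i).2.trans_le ?_
      have h4 : 2 * (((x i : ℕ) : ℝ) + 1) ≤ ((c i : ℕ) : ℝ) := by exact_mod_cast (by lia)
      rw [div_le_div_iff₀ hm' (by positivity)]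
      nlinarith
    rw [Set.indicator_of_mem (by rw [hin p hp]; simp), Measure.real, jmu_congr _ _ _ _ _ hin]
    simp

/-- All the bits of a configuration. -/
def jbits (m d : ℕ) (P : (Fin d → Fin m) → Fin d → ℝ) : (Fin d → Fin m) → Fin d → Bool :=
  fun x i => jbit m d x (P x) i

theorem jbits_meas (m d : ℕ) : Measurable (jbits m d) := by
  refine measurable_pi_iff.2 fun x => measurable_pi_iff.2 fun i => ?_
  exact (jbit_meas m d x i).comp (measurable_pi_apply x)

theorem jchoice_ge (m d A : ℕ) (hA : A < m) (s : ℝ) (W : (Fin d → Fin m) → Fin d → Bool)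
    (j : Fin d) : 2 * A ≤ (jchoice m d A hA s W j : ℕ) := by
  unfold jchoice jpick
  split_ifs with h
  · have := h.choose_spec.1
    simp only; lia
  · simp

open scoped Classical in
theorem jside_sum (m d A : ℕ) (hm : 1 ≤ m) (hA : A < m) (s : ℝ)
    (P : (Fin d → Fin m) → Fin d → ℝ) (hP : ∀ x, P x ∈ jitterCube m d x) (i : Fin d) :
    Set.indicator {P : (Fin d → Fin m) → Fin d → ℝ | ∃ k ∈ Finset.Ici (⟨A, hA⟩ : Fin m),
        s ≤ ∑ x ∈ jlayer m d A i k, jsgn (jbits m d P x i)} (fun _ => s / 2) P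
      ≤ ∑ x ∈ jside m d A i, jterm m d x (jchoice m d A hA s (jbits m d P)) (P x) := by
  rw [Finset.sum_congr rfl fun x hx => jterm_side m d A hm i x hx _
    (jchoice_ge m d A hA s (jbits m d P)) (P x) (hP x)]
  by_cases h : ∃ k : Fin m, A ≤ (k : ℕ) ∧ s ≤ ∑ x ∈ jlayer m d A i k, jsgn (jbits m d P x i)
  · have hc : (jchoice m d A hA s (jbits m d P) i : ℕ) = 2 * (h.choose : ℕ) + 1 := by
      unfold jchoice jpick; rw [dif_pos h]
    obtain ⟨h1, h2⟩ := h.choose_spec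
    set k := h.choose
    rw [Set.indicator_of_mem (by
      exact ⟨k, by simpa [Fin.le_def] using h1, h2⟩)]
    rw [hc, ← Finset.sum_filter]
    have e : (jside m d A i).filter (fun x => 2 * (k : ℕ) + 1 = 2 * (x i : ℕ) + 1) =
        jlayer m d A i k := by
      ext x
      simp only [jside, jlayer, Finset.mem_filter, Finset.mem_univ, true_and]
      constructor
      · rintro ⟨⟨h3, h4⟩, h5⟩
        exact ⟨Fin.ext (by lia), h4⟩
      · rintro ⟨h3, h4⟩
        exact ⟨⟨by rw [h3]; exact h1, h4⟩, by rw [h3]⟩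
    rw [e, ← Finset.sum_div]
    unfold jbits at h2
    linarith
  · have hc : (jchoice m d A hA s (jbits m d P) i : ℕ) = 2 * A := by
      unfold jchoice jpick; rw [dif_neg h]
    rw [Set.indicator_of_notMem (by
      rintro ⟨k, h3, h4⟩
      exact h ⟨k, by simpa [Fin.le_def] using h3, h4⟩)]
    rw [hc]
    apply Finset.sum_nonneg
    intro x _
    rw [if_neg (by lia)]

open scoped Classical in
theorem jchoice_congr (m d A : ℕ) (hA : A < m) (s : ℝ) (W V : (Fin d → Fin m) → Fin d → Bool)
    (h : ∀ x ∈ Finset.univ.biUnion (jside m d A), W x = V x) :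
    jchoice m d A hA s W = jchoice m d A hA s V := by
  funext i
  have key : ∀ k : Fin m, A ≤ (k : ℕ) → ∑ x ∈ jlayer m d A i k, jsgn (W x i) =
      ∑ x ∈ jlayer m d A i k, jsgn (V x i) := by
    intro k hk
    refine Finset.sum_congr rfl fun x hx => ?_
    have hxs : x ∈ Finset.univ.biUnion (jside m d A) := by
      rw [Finset.mem_biUnion]
      refine ⟨i, Finset.mem_univ _, ?_⟩
      simp only [jside, jlayer, Finset.mem_filter, Finset.mem_univ, true_and] at hx ⊢
      exact ⟨by rw [hx.1]; exact hk, hx.2⟩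
    rw [h x hxs]
  unfold jchoice
  congr 1
  funext k
  apply propext
  constructor
  · rintro ⟨h1, h2⟩; exact ⟨h1, by rwa [← key k h1]⟩
  · rintro ⟨h1, h2⟩; exact ⟨h1, by rwa [key k h1]⟩

open scoped Classical in
theorem jindep (m d A : ℕ) (hm : 1 ≤ m) (hA : A < m) (s : ℝ) (x0 : Fin d → Fin m)
    (hx0 : x0 ∉ Finset.univ.biUnion (jside m d A)) :
    IndepFun (fun P => jchoice m d A hA s (jbits m d P)) (fun P => P x0) (jitterMeasure m d) := by
  have := fun x => jmu_prob m d hm x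
  have hind : iIndepFun (fun (x : Fin d → Fin m) (P : (Fin d → Fin m) → Fin d → ℝ) => P x)
      (Measure.pi (jmu m d)) :=
    iIndepFun_pi (X := fun _ => id) (fun _ => aemeasurable_id)
  have h := js_indep (Measure.pi (jmu m d)) _ (fun x => measurable_pi_apply x) hind 0
    (Finset.univ.biUnion (jside m d A)) {x0} (by simpa using hx0)
    (fun P => jchoice m d A hA s (jbits m d P)) (fun P => P x0)
    ((Measurable.of_discrete (f := jchoice m d A hA s)).comp (jbits_meas m d)) (measurable_pi_apply x0)
  rw [jit_eq]
  convert h using 1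
  · funext P
    refine jchoice_congr m d A hA s _ _ fun x hx => ?_
    funext i
    simp only [jbits, if_pos hx]
  · funext P
    simp

theorem jterm_meas (m d : ℕ) (x : Fin d → Fin m) (c : Fin d → Fin (2 * m)) :
    Measurable (jterm m d x c) :=
  (measurable_const.indicator (jm_box d _)).sub_const _

theorem jterm_bound (m d : ℕ) (hm : 1 ≤ m) (x : Fin d → Fin m) (c : Fin d → Fin (2 * m))
    (p : Fin d → ℝ) : |jterm m d x c p| ≤ 1 := by
  have := jmu_prob m d hm x
  unfold jterm
  have h1 : (jmu m d x).real (anchoredBox d (jcorner m d c)) ≤ 1 := measureReal_le_one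
  have h0 : 0 ≤ (jmu m d x).real (anchoredBox d (jcorner m d c)) := measureReal_nonneg
  simp only [Set.indicator]
  rw [abs_le]
  split_ifs <;> constructor <;> linarith

theorem jterm_mean (m d : ℕ) (hm : 1 ≤ m) (x : Fin d → Fin m) (c : Fin d → Fin (2 * m)) :
    ∫ P, jterm m d x c (P x) ∂(jitterMeasure m d) = 0 := by
  have := fun x => jmu_prob m d hm x
  rw [jit_eq, integral_comp_eval (jterm_meas m d x c).aestronglyMeasurable]
  unfold jterm
  rw [integral_sub ((integrable_const _).indicator (jm_box d _)) (integrable_const _),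
    integral_indicator_const _ (jm_box d _)]
  simp

theorem jterm_choice_meas (m d A : ℕ) (hA : A < m) (s : ℝ) (x : Fin d → Fin m) :
    Measurable (fun P => jterm m d x (jchoice m d A hA s (jbits m d P)) (P x)) := by
  have h1 : Measurable (fun P => jchoice m d A hA s (jbits m d P)) :=
    (Measurable.of_discrete (f := jchoice m d A hA s)).comp (jbits_meas m d)
  classical
  have e : (fun P : (Fin d → Fin m) → Fin d → ℝ =>
      jterm m d x (jchoice m d A hA s (jbits m d P)) (P x)) = fun P =>
      ∑ c, (if jchoice m d A hA s (jbits m d P) = c then (1 : ℝ) else 0) * jterm m d x c (P x) := by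
    funext P; simp
  have hφ : ∀ c : Fin d → Fin (2 * m), Measurable
      (fun k : Fin d → Fin (2 * m) => if k = c then (1 : ℝ) else 0) := fun c =>
    Measurable.of_discrete
  rw [e]
  exact Finset.measurable_fun_sum _ fun c _ => ((hφ c).comp h1).mul
    ((jterm_meas m d x c).comp (measurable_pi_apply x))

theorem jterm_choice_int (m d A : ℕ) (hm : 1 ≤ m) (hA : A < m) (s : ℝ) (x : Fin d → Fin m) :
    Integrable (fun P => jterm m d x (jchoice m d A hA s (jbits m d P)) (P x))
      (jitterMeasure m d) := by
  have := fun x => jmu_prob m d hm x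
  rw [jit_eq]
  exact Integrable.of_bound (jterm_choice_meas m d A hA s x).aestronglyMeasurable 1
    (Filter.Eventually.of_forall fun P => jterm_bound m d hm x _ _)

open scoped Classical in
theorem jterm_choice_mean (m d A : ℕ) (hm : 1 ≤ m) (hA : A < m) (s : ℝ) (x : Fin d → Fin m)
    (hx : x ∉ Finset.univ.biUnion (jside m d A)) :
    ∫ P, jterm m d x (jchoice m d A hA s (jbits m d P)) (P x) ∂(jitterMeasure m d) = 0 := by
  have := fun x => jmu_prob m d hm x
  have h1 : Measurable (fun P => jchoice m d A hA s (jbits m d P)) :=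
    (Measurable.of_discrete (f := jchoice m d A hA s)).comp (jbits_meas m d)
  have e : ∀ P : (Fin d → Fin m) → Fin d → ℝ,
      jterm m d x (jchoice m d A hA s (jbits m d P)) (P x) =
      ∑ c, (if jchoice m d A hA s (jbits m d P) = c then (1 : ℝ) else 0) * jterm m d x c (P x) := by
    intro P; simp
  have hφ : ∀ c : Fin d → Fin (2 * m), Measurable
      (fun k : Fin d → Fin (2 * m) => if k = c then (1 : ℝ) else 0) := fun c =>
    Measurable.of_discrete
  simp_rw [e]
  rw [integral_finsetSum]
  · refine Finset.sum_eq_zero fun c _ => ?_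
    have h := ((jindep m d A hm hA s x hx).comp (hφ c)
      (jterm_meas m d x c)).integral_fun_mul_eq_mul_integral
      ((hφ c).comp h1).aestronglyMeasurable
      ((jterm_meas m d x c).comp (measurable_pi_apply x)).aestronglyMeasurable
    simp only [Function.comp] at h
    rw [h, jterm_mean m d hm, mul_zero]
  · intro c _
    rw [jit_eq]
    refine Integrable.of_bound (((hφ c).comp h1).mul
      ((jterm_meas m d x c).comp (measurable_pi_apply x))).aestronglyMeasurable 1
      (Filter.Eventually.of_forall fun P => ?_)
    have := jterm_bound m d hm x c (P x)
    rw [Real.norm_eq_abs, abs_mul]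
    split_ifs <;> simp [this]

theorem jsgn_indep (m d : ℕ) (hm : 1 ≤ m) (i : Fin d) :
    iIndepFun (fun x P => jsgn (jbits m d P x i)) (jitterMeasure m d) := by
  have := fun x => jmu_prob m d hm x
  rw [jit_eq]
  exact iIndepFun_pi (X := fun x p => jsgn (jbit m d x p i)) fun x =>
    ((Measurable.of_discrete (f := jsgn)).comp (jbit_meas m d x i)).aemeasurable

theorem jsgn_mean (m d : ℕ) (hm : 1 ≤ m) (i : Fin d) (x : Fin d → Fin m) :
    ∫ P, jsgn (jbits m d P x i) ∂(jitterMeasure m d) = 0 := by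
  have := fun x => jmu_prob m d hm x
  have hms : MeasurableSet {p : Fin d → ℝ | p i < ((x i : ℝ) + 1 / 2) / m} :=
    measurableSet_lt (measurable_pi_apply i) measurable_const
  rw [jit_eq]
  unfold jbits
  refine (integral_comp_eval (μ := jmu m d) (f := fun p => jsgn (jbit m d x p i)) (i := x)
    ((Measurable.of_discrete (f := jsgn)).comp
      (jbit_meas m d x i)).aestronglyMeasurable).trans ?_
  have e : ∀ p, jsgn (jbit m d x p i) =
      Set.indicator {p : Fin d → ℝ | p i < ((x i : ℝ) + 1 / 2) / m} (fun _ => (2 : ℝ)) p - 1 := by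
    intro p
    by_cases hb : p i < ((x i : ℝ) + 1 / 2) / m
    · simp only [Set.indicator, Set.mem_ofPred_eq, jbit, jsgn, hb, decide_true, if_true]; norm_num
    · simp only [Set.indicator, Set.mem_ofPred_eq, jbit, jsgn, hb, decide_false]; norm_num
  simp_rw [e]
  rw [integral_sub ((integrable_const _).indicator hms) (integrable_const _),
    integral_indicator_const _ hms, Measure.real, jmu_half m d hm x i,
    ENNReal.toReal_ofReal (by norm_num)]
  simp

theorem jmain (m d : ℕ) (hd : 2 ≤ d) (hdm : d ≤ m) :
    d * (((Nat.log 16 (m / d) + 1 : ℕ) * (√(((m - m / d) ^ (d - 1) /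
      (Nat.log 16 (m / d) + 1) : ℕ) : ℝ) / 5)) / 2 * (1 / 17)) ≤ expStarDisc m d := by
  classical
  have hm : 1 ≤ m := by lia
  have hprob := fun x => jmu_prob m d hm x
  have hM1 : 1 ≤ m / d := (Nat.one_le_div_iff (by lia)).2 hdm
  have hMm : m / d ≤ m := Nat.div_le_self m d
  obtain ⟨A, hAdef⟩ : ∃ A, A = m - m / d := ⟨_, rfl⟩
  have hA : A < m := by lia
  have hcard : (Finset.Ici (⟨A, hA⟩ : Fin m)).card = m / d := by
    rw [Fin.card_Ici]; simp only; lia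
  rw [← hAdef]
  have hPM : IsProbabilityMeasure (jitterMeasure m d) := by rw [jit_eq]; infer_instance
  have hsm : ∀ i x, Measurable (fun P => jsgn (jbits m d P x i)) := fun i x =>
    ((Measurable.of_discrete (f := jsgn)).comp (jbit_meas m d x i)).comp (measurable_pi_apply x)
  have hex := fun i : Fin d => js_exists (jitterMeasure m d) (fun x P => jsgn (jbits m d P x i))
    (hsm i) (jsgn_indep m d hm i)
    (fun x P => by unfold jsgn; split_ifs <;> simp) (jsgn_mean m d hm i) (jlayer m d A i)
    (fun k l hkl => by
      rw [Finset.disjoint_left]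
      intro x h1 h2
      simp only [jlayer, Finset.mem_filter, Finset.mem_univ, true_and] at h1 h2
      exact hkl (h1.1.symm.trans h2.1))
    (Finset.Ici (⟨A, hA⟩ : Fin m)) (A ^ (d - 1)) (by rw [hcard]; exact hM1)
    (fun k _ => jlayer_card m d A hA i k)
  rw [hcard] at hex
  set s : ℝ := (Nat.log 16 (m / d) + 1 : ℕ) * (√((A ^ (d - 1) /
      (Nat.log 16 (m / d) + 1) : ℕ) : ℝ) / 5)
  have hs0 : 0 ≤ s := by positivity
  set E : Fin d → Set ((Fin d → Fin m) → Fin d → ℝ) := fun i =>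
    {P | ∃ k ∈ Finset.Ici (⟨A, hA⟩ : Fin m), s ≤ ∑ x ∈ jlayer m d A i k, jsgn (jbits m d P x i)}
  have hEm : ∀ i, MeasurableSet (E i) := by
    intro i
    have : E i = ⋃ k ∈ Finset.Ici (⟨A, hA⟩ : Fin m),
        {P | s ≤ ∑ x ∈ jlayer m d A i k, jsgn (jbits m d P x i)} := by
      ext P; simp [E]
    rw [this]
    exact Finset.measurableSet_biUnion _ fun k _ =>
      measurableSet_le measurable_const (Finset.measurable_fun_sum _ fun x _ => hsm i x)
  set S := Finset.univ.biUnion (jside m d A)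
  set F : ((Fin d → Fin m) → Fin d → ℝ) → ℝ := fun P =>
    ∑ i, (E i).indicator (fun _ => s / 2) P +
      ∑ x ∈ Sᶜ, jterm m d x (jchoice m d A hA s (jbits m d P)) (P x)
  have hI1 : ∀ i, Integrable ((E i).indicator (fun _ => s / 2)) (jitterMeasure m d) := fun i =>
    (integrable_const _).indicator (hEm i)
  have hI2 : Integrable (fun P => ∑ i, (E i).indicator (fun _ => s / 2) P) (jitterMeasure m d) :=
    integrable_finsetSum _ fun i _ => hI1 i
  have hI3 : Integrable (fun P => ∑ x ∈ Sᶜ, jterm m d x (jchoice m d A hA s (jbits m d P)) (P x))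
      (jitterMeasure m d) :=
    integrable_finsetSum _ fun x _ => jterm_choice_int m d A hm hA s x
  have hFint : Integrable F (jitterMeasure m d) := hI2.add hI3
  have hF : ∫ P, F P ∂(jitterMeasure m d) = ∑ i, (jitterMeasure m d).real (E i) * (s / 2) := by
    simp only [F]
    rw [integral_add hI2 hI3, integral_finsetSum _ fun i _ => hI1 i,
      integral_finsetSum _ fun x _ => jterm_choice_int m d A hm hA s x]
    rw [Finset.sum_eq_zero (s := Sᶜ) fun x hx =>
      jterm_choice_mean m d A hm hA s x (Finset.mem_compl.1 hx), add_zero]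
    refine Finset.sum_congr rfl fun i _ => ?_
    rw [integral_indicator_const _ (hEm i), smul_eq_mul]
  have hae : ∀ᵐ P ∂(jitterMeasure m d), ∀ x, P x ∈ jitterCube m d x := by
    rw [ae_all_iff]
    intro x
    rw [jit_eq]
    have h1 : ∀ᵐ p ∂(jmu m d x), p ∈ jitterCube m d x :=
      Measure.ae_smul_measure (ae_restrict_mem (jm_cube m d x)) _
    exact (Measure.quasiMeasurePreserving_eval (jmu m d) x).ae h1
  have hle : F ≤ᵐ[jitterMeasure m d] starDisc m d := by
    filter_upwards [hae] with P hP
    have h1 := jdisc_le_star m d P _ (jcorner_mem m d (jchoice m d A hA s (jbits m d P)))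
    have h2 := jdisc_ge m d hm P _ (jcorner_mem m d (jchoice m d A hA s (jbits m d P)))
    have h3 : ∑ i, (E i).indicator (fun _ => s / 2) P ≤
        ∑ x ∈ S, jterm m d x (jchoice m d A hA s (jbits m d P)) (P x) := by
      rw [Finset.sum_biUnion]
      · exact Finset.sum_le_sum fun i _ => jside_sum m d A hm hA s P hP i
      · intro i _ j _ hij
        simp only [Function.onFun]
        rw [Finset.disjoint_left]
        intro x h1 h2
        simp only [jside, Finset.mem_filter, Finset.mem_univ, true_and] at h1 h2
        have := h2.2 i hij
        lia
    have h4 := Finset.sum_add_sum_compl S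
      (fun x => jterm m d x (jchoice m d A hA s (jbits m d P)) (P x))
    have h5 := le_abs_self (jdisc m d P
      (anchoredBox d (jcorner m d (jchoice m d A hA s (jbits m d P)))))
    simp only [F]
    change ∑ x, jterm m d x (jchoice m d A hA s (jbits m d P)) (P x) ≤ _ at h2
    linarith
  have hfin := integral_mono_ae hFint (star_int m d hm) hle
  rw [hF] at hfin
  refine le_trans ?_ hfin
  calc (d : ℝ) * (s / 2 * (1 / 17)) = ∑ i : Fin d, (1 / 17) * (s / 2) := by
        simp only [Finset.sum_const, Finset.card_univ, Fintype.card_fin, nsmul_eq_mul]; ring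
    _ ≤ _ := Finset.sum_le_sum fun i _ => mul_le_mul_of_nonneg_right (hex i) (by positivity)

/-- There is a constant `C > 0` such that for all integers `m, d ≥ 2` with `m ≥ d`, the expected
star discrepancy of a jittered sampling point set of `N = m^d` points in `[0,1)^d` satisfies
`E[D*(P)] ≥ C·√(d·m^d)·√((1 + log(m/d))/(m/d))`. -/
theorem jittered_sampling_lower_bound :
    ∃ C : ℝ, 0 < C ∧
      ∀ m d : ℕ, 2 ≤ m → 2 ≤ d → d ≤ m →
        C * Real.sqrt ((d : ℝ) * (m : ℝ) ^ d) *
            Real.sqrt ((1 + Real.log ((m : ℝ) / d)) / ((m : ℝ) / d))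
          ≤ expStarDisc m d := by
  refine ⟨1 / 850, by norm_num, fun m d _ hd hdm => ?_⟩
  exact (js_numeric m d hd hdm).trans (jmain m d hd hdm)
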